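/- Rate–distortion theorem for average concept distortion (Theorem 1): For the problem of communicating concepts with the average distortion d_avg, the rate–distortion function satisfies R(ε) = min over all learning rules Q̃ with d_sem(Q, Q̃) ≤ ε of I_{Q̃}(S;H), where the mutual information is computed under the joint pmf P_S(s)·Q̃(h|s). -/

import Mathlib

open Finset Filter Topology Classical

noncomputable section

/-- `p` is a probability mass function on a finite type. -/
def IsPMF {α : Type*} [Fintype α] (p : α → ℝ) : Prop :=
  (∀ a, 0 ≤ p a) ∧ ∑ a, p a = 1

/-- A learning rule assigns a pmf on models to every dataset. -/
def IsRule {S H : Type*} [Fintype H] (Q : S → H → ℝ) : Prop :=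
  ∀ s, IsPMF (Q s)

/-- True loss `L_c(q)` of a belief `q` over models on concept `c`. -/
def trueLoss {C H : Type*} [Fintype H] (L : C → H → ℝ) (c : C) (q : H → ℝ) : ℝ :=
  ∑ h, q h * L c h

/-- Semantic distortion `d_sem(Q, Q̂)` between two learning rules. -/
def dsem {C S H : Type*} [Fintype C] [Fintype S] [Fintype H]
    (PCS : C → S → ℝ) (L : C → H → ℝ) (Q Qhat : S → H → ℝ) : ℝ :=
  ∑ c, ∑ s, PCS c s * (trueLoss L c (Qhat s) - trueLoss L c (Q s))

/-- Conditional law `Q̂ᵢ(h|s) = P(Ĥᵢ = h | Sᵢ = s)` of the `i`-th decoded model,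
induced by a deterministic blocklength-`n` map `Sⁿ → Hⁿ` when `S₁,…,Sₙ` are
i.i.d. with law `PS`. -/
noncomputable def inducedRule {S H : Type*} [Fintype S] (PS : S → ℝ) {n : ℕ}
    (code : (Fin n → S) → (Fin n → H)) (i : Fin n) : S → H → ℝ := fun s h =>
  (∑ sn : Fin n → S, if sn i = s ∧ code sn i = h then ∏ j, PS (sn j) else 0) / PS s

/-- Average per-model distortion `d_avg` of a blocklength-`n` code. -/
noncomputable def davgCode {C S H : Type*} [Fintype C] [Fintype S] [Fintype H]
    (PCS : C → S → ℝ) (PS : S → ℝ) (L : C → H → ℝ) (Q : S → H → ℝ) {n : ℕ}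
    (code : (Fin n → S) → (Fin n → H)) : ℝ :=
  (1 / (n : ℝ)) * ∑ i : Fin n, dsem PCS L Q (inducedRule PS code i)

/-- Number of messages `⌈2^{nR}⌉` of a `(2^{nR}, n)` code. -/
noncomputable def numMsg (R : ℝ) (n : ℕ) : ℕ := ⌈(2 : ℝ) ^ ((n : ℝ) * R)⌉₊

/-- `(R, ε)` is achievable for `d_avg`: there is a sequence of `(2^{nR}, n)`
codes whose average distortion converges to a limit `< ε`. -/
def AchAvg {C S H : Type*} [Fintype C] [Fintype S] [Fintype H]
    (PCS : C → S → ℝ) (PS : S → ℝ) (L : C → H → ℝ) (Q : S → H → ℝ)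
    (R ε : ℝ) : Prop :=
  ∃ (f : ∀ n : ℕ, (Fin n → S) → Fin (numMsg R n))
    (g : ∀ n : ℕ, Fin (numMsg R n) → (Fin n → H)) (l : ℝ),
      Tendsto (fun n : ℕ => davgCode PCS PS L Q (fun sn => g n (f n sn)))
        atTop (nhds l) ∧ l < ε

/-- Mutual information `I_{Q̃}(S;H)` (in bits) of a learning rule `Q̃` under the
dataset marginal `PS`. -/
noncomputable def minfo {S H : Type*} [Fintype S] [Fintype H]
    (PS : S → ℝ) (Qt : S → H → ℝ) : ℝ :=
  ∑ s, ∑ h, PS s * Qt s h * Real.logb 2 (Qt s h / ∑ s', PS s' * Qt s' h)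

/-!
Up to an additive constant, the semantic distortion of a rule is the expectation of the letterwise
distortion `E[L_C(h) | S = s]`, so the problem is that of Shannon's rate–distortion theorem for this
distortion measure.

*Converse.* The rule obtained by averaging the conditional laws of the decoded models over the
letters has the distortion of the code, and by Jensen's inequality its mutual information is at most
`log₂ M / n` for `M` messages. The limit is taken in the set of pairs (rate, distortion) dominated
by those of a rule, which is closed because the rules form a compact set.

*Achievability.* Independent random codewords with the output law of a rule cover the typical blocks
once the rate exceeds the mutual information. This only bounds the distortion from above, whereas
achievability asks for a limit: either a constant model is good enough, or replacing the letters of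
the codewords one at a time by a constant model brings the distortion within `O(1 / n)` of any
prescribed value.
-/
section FiniteProbability

variable {α : Type*} [Fintype α]

/-- The expectation `∑ a, p a * X a` of the random variable `X` under the weights `p`, which need
not be normalized. -/
def mean (p X : α → ℝ) : ℝ := ∑ a, p a * X a

/-- The probability of the event `E` under the weights `p`. -/
def prob (p : α → ℝ) (E : Set α) : ℝ := mean p (E.indicator 1)

lemma mean_add (p X Y : α → ℝ) : mean p (fun a => X a + Y a) = mean p X + mean p Y := by
  simp only [mean, mul_add, sum_add_distrib]

lemma mean_const_mul (p X : α → ℝ) (c : ℝ) : mean p (fun a => c * X a) = c * mean p X := by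
  simp only [mean, mul_sum, mul_left_comm]

lemma mean_sum {ι : Type*} (t : Finset ι) (p : α → ℝ) (X : ι → α → ℝ) :
    mean p (fun a => ∑ i ∈ t, X i a) = ∑ i ∈ t, mean p (X i) := by
  simp only [mean, mul_sum]
  exact sum_comm

lemma mean_mono {p X Y : α → ℝ} (hp : ∀ a, 0 ≤ p a) (h : ∀ a, 0 < p a → X a ≤ Y a) :
    mean p X ≤ mean p Y := by
  refine sum_le_sum fun a _ => ?_
  rcases (hp a).eq_or_lt with ha | ha
  · simp [← ha]
  · exact mul_le_mul_of_nonneg_left (h a ha) ha.le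

lemma prob_le_add {p : α → ℝ} (hp : ∀ a, 0 ≤ p a) {E F G : Set α}
    (h : ∀ a, 0 < p a → a ∈ E → a ∈ F ∪ G) : prob p E ≤ prob p F + prob p G := by
  rw [prob, prob, prob, ← mean_add]
  refine mean_mono hp fun a ha => ?_
  have := h a ha
  by_cases hE : a ∈ E <;> by_cases hF : a ∈ F <;> by_cases hG : a ∈ G <;> simp_all

namespace IsPMF

variable {p : α → ℝ}

lemma nonempty (hp : IsPMF p) : Nonempty α := by
  by_contra h
  rw [not_nonempty_iff] at h
  simpa using hp.2

lemma mean_const (hp : IsPMF p) (c : ℝ) : mean p (fun _ => c) = c := by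
  rw [mean, ← sum_mul, hp.2, one_mul]

lemma mean_le (hp : IsPMF p) {X : α → ℝ} {c : ℝ} (h : ∀ a, 0 < p a → X a ≤ c) : mean p X ≤ c :=
  (mean_mono hp.1 h).trans_eq (hp.mean_const c)

lemma abs_mean_le (hp : IsPMF p) {X : α → ℝ} {c : ℝ} (h : ∀ a, |X a| ≤ c) : |mean p X| ≤ c := by
  refine (abs_sum_le_sum_abs _ _).trans ?_
  simp only [abs_mul, abs_of_nonneg (hp.1 _)]
  exact hp.mean_le fun a _ => h a

lemma exists_le_mean (hp : IsPMF p) (X : α → ℝ) : ∃ a, X a ≤ mean p X := by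
  have := hp.nonempty
  by_contra! h
  obtain ⟨a, ha⟩ := Finite.exists_min X
  have hmin : X a ≤ mean p X :=
    (hp.mean_const (X a)).symm.trans_le (mean_mono hp.1 fun b _ => ha b)
  exact (h a).not_ge hmin

lemma prob_nonneg (hp : IsPMF p) (E : Set α) : 0 ≤ prob p E :=
  sum_nonneg fun a _ => mul_nonneg (hp.1 a) (Set.indicator_nonneg (fun _ _ => zero_le_one) a)

lemma prob_compl (hp : IsPMF p) (E : Set α) : prob p Eᶜ = 1 - prob p E := by
  rw [eq_sub_iff_add_eq, prob, prob, ← mean_add]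
  refine Eq.trans ?_ (hp.mean_const 1)
  congr with a
  by_cases h : a ∈ E <;> simp [h]

lemma prob_le_one (hp : IsPMF p) (E : Set α) : prob p E ≤ 1 := by
  linarith [hp.prob_compl E, hp.prob_nonneg Eᶜ]

lemma mean_logb_le (hp : IsPMF p) {Z : α → ℝ} {M : ℝ} (hM : 0 < M)
    (hZ : ∀ a, 0 < p a → 0 < Z a) (h : mean p Z ≤ M) :
    mean p (fun a => Real.logb 2 (Z a)) ≤ Real.logb 2 M := by
  have hlog2 : 0 < Real.log 2 := Real.log_pos one_lt_two
  have tangent : ∀ a, 0 < p a →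
      Real.logb 2 (Z a) ≤ (M * Real.log 2)⁻¹ * Z a + (Real.logb 2 M - 1 / Real.log 2) := by
    intro a ha
    have := Real.log_le_sub_one_of_pos (div_pos (hZ a ha) hM)
    rw [Real.log_div (hZ a ha).ne' hM.ne'] at this
    calc Real.logb 2 (Z a) ≤ (Z a / M + Real.log M - 1) / Real.log 2 := by
          exact div_le_div_of_nonneg_right (by linarith) hlog2.le
      _ = _ := by rw [Real.logb]; field_simp; ring
  calc mean p (fun a => Real.logb 2 (Z a))
      ≤ (M * Real.log 2)⁻¹ * mean p Z + (Real.logb 2 M - 1 / Real.log 2) := by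
        refine (mean_mono hp.1 tangent).trans_eq ?_
        rw [mean_add, mean_const_mul, hp.mean_const]
    _ ≤ (M * Real.log 2)⁻¹ * M + (Real.logb 2 M - 1 / Real.log 2) := by gcongr
    _ = Real.logb 2 M := by field_simp; ring

lemma exists_mean_exp_lt_one (hp : IsPMF p) {X : α → ℝ} (hX : mean p X < 0) :
    ∃ t > 0, mean p (fun a => Real.exp (t * X a)) < 1 := by
  have hderiv : HasDerivAt (fun t => mean p fun a => Real.exp (t * X a)) (mean p X) 0 := by
    refine HasDerivAt.fun_sum fun a _ => ?_
    simpa using (((hasDerivAt_id (0 : ℝ)).mul_const (X a)).exp).const_mul (p a)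
  obtain ⟨t, hlt, ht⟩ := ((hderiv.tendsto_slope_zero_right.eventually_lt_const hX).and
    self_mem_nhdsWithin).exists
  refine ⟨t, ht, ?_⟩
  simp only [zero_add, smul_eq_mul, zero_mul, Real.exp_zero, hp.mean_const] at hlt
  linarith [neg_of_mul_neg_right hlt (inv_pos.2 ht).le]

end IsPMF

/-- The law on `αⁿ` of `n` independent letters with law `p`. -/
def iidPMF (n : ℕ) (p : α → ℝ) (x : Fin n → α) : ℝ := ∏ i, p (x i)

lemma mean_iidPMF_prod (n : ℕ) (p : α → ℝ) (F : Fin n → α → ℝ) :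
    mean (iidPMF n p) (fun x => ∏ i, F i (x i)) = ∏ i, mean p (F i) := by
  simp only [mean, iidPMF, ← prod_mul_distrib, Fintype.prod_sum]

lemma sum_prod_eq_one {n : ℕ} {q : Fin n → α → ℝ} (hq : ∀ i, ∑ a, q i a = 1) :
    ∑ x : Fin n → α, ∏ i, q i (x i) = 1 := by
  simp [← Fintype.prod_sum, hq]

namespace IsPMF

variable {p : α → ℝ} {n : ℕ}

lemma iidPMF (hp : IsPMF p) (n : ℕ) : IsPMF (iidPMF n p) :=
  ⟨fun x => prod_nonneg fun i _ => hp.1 (x i), sum_prod_eq_one fun _ => hp.2⟩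

lemma pos_of_iidPMF_pos (hp : IsPMF p) {x : Fin n → α} (hx : 0 < _root_.iidPMF n p x)
    (i : Fin n) : 0 < p (x i) :=
  (hp.1 _).lt_of_ne' (prod_ne_zero_iff.1 hx.ne' i (mem_univ i))

lemma mean_iidPMF_apply (hp : IsPMF p) (i : Fin n) (X : α → ℝ) :
    mean (_root_.iidPMF n p) (fun x => X (x i)) = mean p X := by
  have hsingle : ∀ x : Fin n → α, X (x i) = ∏ j, if j = i then X (x j) else 1 := by simp
  simp only [hsingle, mean_iidPMF_prod n p fun j a => if j = i then X a else 1]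
  rw [prod_eq_single i (fun j _ hj => by simp [hj, hp.mean_const]) (by simp)]
  simp

/-- Chernoff's bound: for small `t > 0` the tail is at most `E[exp (t (X - c))] ^ n`, whose base
is less than one. -/
lemma tendsto_prob_lt_sum (hp : IsPMF p) {X : α → ℝ} {c : ℝ} (hc : mean p X < c) :
    Tendsto (fun n : ℕ => prob (_root_.iidPMF n p) {x | n * c < ∑ i, X (x i)}) atTop (𝓝 0) := by
  obtain ⟨t, ht, hlt⟩ := hp.exists_mean_exp_lt_one (X := fun a => X a + -c)
    (by rw [mean_add, hp.mean_const]; linarith)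
  set r := mean p fun a => Real.exp (t * (X a + -c))
  have hr : 0 ≤ r := sum_nonneg fun a _ => mul_nonneg (hp.1 a) (Real.exp_pos _).le
  refine squeeze_zero (fun n => (hp.iidPMF n).prob_nonneg _) (fun n => ?_)
    (tendsto_pow_atTop_nhds_zero_of_lt_one hr hlt)
  calc prob (_root_.iidPMF n p) {x | n * c < ∑ i, X (x i)}
      ≤ mean (_root_.iidPMF n p) (fun x => ∏ i, Real.exp (t * (X (x i) + -c))) := by
        refine mean_mono (hp.iidPMF n).1 fun x _ => ?_
        rw [← Real.exp_sum, ← mul_sum, sum_add_distrib]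
        refine Set.indicator_apply_le' (fun hx => Real.one_le_exp (mul_nonneg ht.le ?_))
          fun _ => (Real.exp_pos _).le
        have : n * c < ∑ i, X (x i) := hx
        simp
        linarith
    _ = r ^ n := by rw [mean_iidPMF_prod n p fun _ a => Real.exp (t * (X a + -c))]; simp [r]

end IsPMF

end FiniteProbability

section Channel

variable {S H : Type*}

lemma isCompact_setOf_isRule [Fintype H] : IsCompact {W : S → H → ℝ | IsRule W} := by
  convert isCompact_univ_pi fun _ : S => isCompact_stdSimplex ℝ H
  ext W
  simp [IsRule, IsPMF, stdSimplex]

variable {p : S → ℝ} {W : S → H → ℝ}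

/-- The joint law of an input of law `p` and the output of the channel `W`. -/
def jointPMF (p : S → ℝ) (W : S → H → ℝ) (a : S × H) : ℝ := p a.1 * W a.1 a.2

lemma channel_pos (hp : ∀ s, 0 ≤ p s) {a : S × H} (ha : 0 < jointPMF p W a) :
    0 < W a.1 a.2 :=
  pos_of_mul_pos_right ha (hp _)

variable [Fintype S]

/-- The law of the output of the channel `W` for an input of law `p`. -/
def outputPMF (p : S → ℝ) (W : S → H → ℝ) (h : H) : ℝ := ∑ s, p s * W s h

/-- The density of the joint law of input and output with respect to the product of their laws.
Its logarithm is the information density. -/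
def likelihoodRatio (p : S → ℝ) (W : S → H → ℝ) (a : S × H) : ℝ := W a.1 a.2 / outputPMF p W a.2

lemma outputPMF_nonneg (hp : ∀ s, 0 ≤ p s) (hW : ∀ s h, 0 ≤ W s h) (h : H) :
    0 ≤ outputPMF p W h :=
  sum_nonneg fun s _ => mul_nonneg (hp s) (hW s h)

lemma likelihoodRatio_nonneg (hp : ∀ s, 0 ≤ p s) (hW : ∀ s h, 0 ≤ W s h) (a : S × H) :
    0 ≤ likelihoodRatio p W a :=
  div_nonneg (hW _ _) (outputPMF_nonneg hp hW _)

lemma mean_prod_likelihoodRatio_le_one (hp : ∀ s, 0 ≤ p s) (hW : ∀ s h, 0 ≤ W s h)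
    {n : ℕ} (y : Fin n → H) :
    mean (iidPMF n p) (fun x => ∏ i, likelihoodRatio p W (x i, y i)) ≤ 1 := by
  rw [mean_iidPMF_prod n p fun i s => likelihoodRatio p W (s, y i)]
  refine prod_le_one (fun i _ => sum_nonneg fun s _ =>
    mul_nonneg (hp s) (likelihoodRatio_nonneg hp hW _)) fun i _ => ?_
  simp only [mean, likelihoodRatio, ← mul_div_assoc, ← sum_div]
  exact div_self_le_one (outputPMF p W (y i))

variable [Fintype H]

lemma mean_jointPMF (p : S → ℝ) (W : S → H → ℝ) (X : S × H → ℝ) :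
    mean (jointPMF p W) X = mean p fun s => mean (W s) fun h => X (s, h) := by
  simp only [mean, jointPMF, Fintype.sum_prod_type, mul_sum, mul_assoc]

lemma minfo_eq_mean (p : S → ℝ) (W : S → H → ℝ) :
    minfo p W = mean (jointPMF p W) fun a => Real.logb 2 (likelihoodRatio p W a) := by
  simp only [mean, Fintype.sum_prod_type]
  rfl

namespace IsPMF

lemma jointPMF (hp : IsPMF p) (hW : IsRule W) : IsPMF (jointPMF p W) := by
  refine ⟨fun a => mul_nonneg (hp.1 _) ((hW _).1 _), ?_⟩
  simp only [_root_.jointPMF, Fintype.sum_prod_type, ← mul_sum, (hW _).2, mul_one, hp.2]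

lemma outputPMF (hp : IsPMF p) (hW : IsRule W) : IsPMF (outputPMF p W) := by
  refine ⟨outputPMF_nonneg hp.1 fun s => (hW s).1, ?_⟩
  simp only [_root_.outputPMF]
  rw [sum_comm]
  simp only [← mul_sum, (hW _).2, mul_one, hp.2]

end IsPMF

lemma outputPMF_pos (hp : IsPMF p) (hW : IsRule W) {a : S × H} (ha : 0 < jointPMF p W a) :
    0 < outputPMF p W a.2 :=
  ha.trans_le <| single_le_sum (f := fun s => p s * W s a.2)
    (fun s _ => mul_nonneg (hp.1 s) ((hW s).1 _)) (mem_univ a.1)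

lemma likelihoodRatio_pos (hp : IsPMF p) (hW : IsRule W) {a : S × H}
    (ha : 0 < jointPMF p W a) : 0 < likelihoodRatio p W a :=
  div_pos (channel_pos hp.1 ha) (outputPMF_pos hp hW ha)

lemma minfo_nonneg (hp : IsPMF p) (hW : IsRule W) : 0 ≤ minfo p W := by
  have hmean : mean (jointPMF p W) (fun a => (likelihoodRatio p W a)⁻¹) ≤ 1 := by
    calc mean (jointPMF p W) (fun a => (likelihoodRatio p W a)⁻¹)
        ≤ ∑ a : S × H, p a.1 * outputPMF p W a.2 := sum_le_sum fun a _ => by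
          have hnonneg : 0 ≤ p a.1 * outputPMF p W a.2 :=
            mul_nonneg (hp.1 _) ((hp.outputPMF hW).1 _)
          rcases eq_or_ne (W a.1 a.2) 0 with h | h
          · simpa [jointPMF, h] using hnonneg
          · simp only [jointPMF, likelihoodRatio, inv_div]
            field_simp
            rfl
      _ = 1 := by
          simp only [Fintype.sum_prod_type, ← mul_sum, (hp.outputPMF hW).2, mul_one, hp.2]
  have hJensen := (hp.jointPMF hW).mean_logb_le one_pos
    (fun a ha => inv_pos.2 (likelihoodRatio_pos hp hW ha)) hmean
  simp only [Real.logb_inv, Real.logb_one] at hJensen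
  rw [minfo_eq_mean]
  simpa [mean] using hJensen

lemma minfo_eq_entropy_sub (hp : IsPMF p) (hW : IsRule W) :
    minfo p W = (∑ h, Real.negMulLog (outputPMF p W h) -
      mean p fun s => ∑ h, Real.negMulLog (W s h)) / Real.log 2 := by
  have hout : ∑ h, Real.negMulLog (outputPMF p W h) =
      mean (jointPMF p W) fun a => -Real.log (outputPMF p W a.2) := by
    simp only [mean, jointPMF, Fintype.sum_prod_type, Real.negMulLog, outputPMF, sum_mul,
      ← sum_neg_distrib]
    rw [sum_comm]
    simp
  have hcond : (mean p fun s => ∑ h, Real.negMulLog (W s h)) =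
      mean (jointPMF p W) fun a => -Real.log (W a.1 a.2) := by
    rw [mean_jointPMF]
    simp only [mean, Real.negMulLog, neg_mul_comm]
  rw [minfo_eq_mean, hout, hcond, mean, mean, mean, ← sum_sub_distrib, sum_div]
  refine sum_congr rfl fun a _ => ?_
  rcases ((hp.jointPMF hW).1 a).eq_or_lt with ha | ha
  · simp [← ha]
  · rw [Real.logb, likelihoodRatio,
      Real.log_div (channel_pos hp.1 ha).ne' (outputPMF_pos hp hW ha).ne']
    ring

lemma continuousOn_minfo (hp : IsPMF p) :
    ContinuousOn (minfo p) {W : S → H → ℝ | IsRule W} := by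
  refine ContinuousOn.congr (Continuous.continuousOn ?_) fun W hW => minfo_eq_entropy_sub hp hW
  have := Real.continuous_negMulLog
  unfold outputPMF mean
  fun_prop

end Channel

section BlockCode

variable {S H : Type*} [Fintype S] {p : S → ℝ} {n : ℕ}

/-- The expected average of `F (xᵢ, yᵢ)` over the letters of a block `x` with independent letters of
law `p` and its reproduction `y = code x`. For a distortion measure `F`, this is the expected
per-letter distortion of the code. -/
def blockMean (p : S → ℝ) (F : S × H → ℝ) (code : (Fin n → S) → Fin n → H) : ℝ :=
  mean (iidPMF n p) fun x => (1 / n : ℝ) * ∑ i, F (x i, code x i)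

/-- The average over `i` of the rules induced by a block code. The induced rules are junk at the
datasets of probability zero, where the rule `Q` is used instead. -/
def averagedRule (p : S → ℝ) (Q : S → H → ℝ) (code : (Fin n → S) → Fin n → H) (s : S) (h : H) : ℝ :=
  if p s = 0 then Q s h else (1 / n : ℝ) * ∑ i, inducedRule p code i s h

lemma jointPMF_inducedRule (p : S → ℝ) (code : (Fin n → S) → Fin n → H) (i : Fin n) (a : S × H) :
    jointPMF p (inducedRule p code i) a =
      mean (iidPMF n p) fun x => if (x i, code x i) = a then 1 else 0 := by
  obtain ⟨s, h⟩ := a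
  simp only [jointPMF, inducedRule, mean, Prod.mk.injEq, mul_ite, mul_one, mul_zero, iidPMF]
  rcases eq_or_ne (p s) 0 with hs | hs
  · rw [hs, zero_mul]
    refine (sum_eq_zero fun x _ => ite_eq_right_iff.2 fun hx => ?_).symm
    exact prod_eq_zero (mem_univ i) (hx.1 ▸ hs)
  · exact mul_div_cancel₀ _ hs

lemma jointPMF_averagedRule (p : S → ℝ) (Q : S → H → ℝ) (code : (Fin n → S) → Fin n → H)
    (a : S × H) :
    jointPMF p (averagedRule p Q code) a =
      (1 / n : ℝ) * ∑ i, jointPMF p (inducedRule p code i) a := by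
  by_cases hs : p a.1 = 0
  · simp [jointPMF, hs]
  · simp only [jointPMF, averagedRule, if_neg hs, ← mul_sum, mul_left_comm]

lemma jointPMF_averagedRule_pos (hp : IsPMF p) (Q : S → H → ℝ)
    (code : (Fin n → S) → Fin n → H) {x : Fin n → S} (hx : 0 < iidPMF n p x) (i : Fin n) :
    0 < jointPMF p (averagedRule p Q code) (x i, code x i) := by
  have hn : 0 < n := i.pos
  have hterm : ∀ j a x', 0 ≤ iidPMF n p x' * if (x' j, code x' j) = a then 1 else 0 :=
    fun _ _ x' => mul_nonneg ((hp.iidPMF n).1 x') (by split_ifs <;> norm_num)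
  simp only [jointPMF_averagedRule, jointPMF_inducedRule, mean]
  refine mul_pos (by positivity) (sum_pos' (fun j _ => sum_nonneg fun x' _ => hterm j _ x')
    ⟨i, mem_univ i, sum_pos' (fun x' _ => hterm i _ x') ⟨x, mem_univ x, ?_⟩⟩)
  simpa using hx

variable [Fintype H]

lemma mean_jointPMF_inducedRule (p : S → ℝ) (code : (Fin n → S) → Fin n → H) (i : Fin n)
    (F : S × H → ℝ) :
    mean (jointPMF p (inducedRule p code i)) F = mean (iidPMF n p) fun x => F (x i, code x i) := by
  simp only [mean, jointPMF_inducedRule, sum_mul]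
  rw [sum_comm]
  simp

lemma mean_jointPMF_averagedRule (p : S → ℝ) (Q : S → H → ℝ)
    (code : (Fin n → S) → Fin n → H) (F : S × H → ℝ) :
    mean (jointPMF p (averagedRule p Q code)) F = blockMean p F code := by
  calc mean (jointPMF p (averagedRule p Q code)) F
      = (1 / n : ℝ) * ∑ i, mean (jointPMF p (inducedRule p code i)) F := by
        simp only [mean, jointPMF_averagedRule, mul_assoc, sum_mul, ← mul_sum]
        rw [sum_comm]
    _ = blockMean p F code := by
        simp only [mean_jointPMF_inducedRule, blockMean, mean_const_mul, mean_sum]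

lemma isPMF_inducedRule (hp : IsPMF p) (code : (Fin n → S) → Fin n → H) (i : Fin n) {s : S}
    (hs : p s ≠ 0) : IsPMF (inducedRule p code i s) := by
  refine ⟨fun h => div_nonneg (sum_nonneg fun x _ => ?_) (hp.1 s), mul_left_cancel₀ hs ?_⟩
  · split_ifs
    exacts [(hp.iidPMF n).1 x, le_rfl]
  · calc p s * ∑ h, inducedRule p code i s h
        = mean (jointPMF p (inducedRule p code i)) (fun a => if a.1 = s then 1 else 0) := by
          simp [mean, Fintype.sum_prod_type, jointPMF, mul_sum]
      _ = p s * 1 := by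
          rw [mean_jointPMF_inducedRule,
            hp.mean_iidPMF_apply i fun t => if t = s then 1 else 0]
          simp [mean]

lemma isRule_averagedRule (hp : IsPMF p) {Q : S → H → ℝ} (hQ : IsRule Q) (hn : 0 < n)
    (code : (Fin n → S) → Fin n → H) : IsRule (averagedRule p Q code) := by
  intro s
  unfold averagedRule
  split_ifs with hs
  · exact hQ s
  · have hinduced := fun i => isPMF_inducedRule hp code i hs
    refine ⟨fun h => mul_nonneg (by positivity) (sum_nonneg fun i _ => (hinduced i).1 h), ?_⟩
    rw [← mul_sum, sum_comm]
    simp only [(hinduced _).2]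
    simp [ne_of_gt hn]

/-- Jensen's inequality bounds the mean log-likelihood ratio of the block by the logarithm of the
mean likelihood ratio, and each of the `M` codewords contributes at most one to the latter. -/
lemma minfo_averagedRule_le (hp : IsPMF p) {Q : S → H → ℝ} (hQ : IsRule Q) (hn : 0 < n) {M : ℕ}
    (hM : 0 < M) (f : (Fin n → S) → Fin M) (g : Fin M → Fin n → H) :
    minfo p (averagedRule p Q fun x => g (f x)) ≤ (1 / n : ℝ) * Real.logb 2 M := by
  set W := averagedRule p Q fun x => g (f x)
  have hW : IsRule W := isRule_averagedRule hp hQ hn _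
  have hratio_nonneg := likelihoodRatio_nonneg hp.1 fun s => (hW s).1
  have hratio_pos : ∀ x, 0 < iidPMF n p x → ∀ i, 0 < likelihoodRatio p W (x i, g (f x) i) :=
    fun x hx i => likelihoodRatio_pos hp hW (jointPMF_averagedRule_pos hp Q _ hx i)
  have hmean : mean (iidPMF n p) (fun x => ∏ i, likelihoodRatio p W (x i, g (f x) i)) ≤ M :=
    calc mean (iidPMF n p) (fun x => ∏ i, likelihoodRatio p W (x i, g (f x) i))
        ≤ mean (iidPMF n p) (fun x => ∑ m, ∏ i, likelihoodRatio p W (x i, g m i)) :=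
          mean_mono (hp.iidPMF n).1 fun x _ =>
            single_le_sum (f := fun m => ∏ i, likelihoodRatio p W (x i, g m i))
              (fun m _ => prod_nonneg fun i _ => hratio_nonneg _) (mem_univ (f x))
      _ ≤ ∑ _m : Fin M, 1 := by
          rw [mean_sum]
          exact sum_le_sum fun m _ =>
            mean_prod_likelihoodRatio_le_one hp.1 (fun s => (hW s).1) (g m)
      _ = M := by simp
  have hJensen := (hp.iidPMF n).mean_logb_le (by positivity)
    (fun x hx => prod_pos fun i _ => hratio_pos x hx i) hmean
  rw [minfo_eq_mean, mean_jointPMF_averagedRule, blockMean, mean_const_mul]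
  gcongr
  refine (mean_mono (hp.iidPMF n).1 fun x hx => ?_).trans hJensen
  rw [Real.logb_prod _ _ fun i _ => (hratio_pos x hx i).ne']

end BlockCode

section Region

variable {C S H : Type*} [Fintype C] [Fintype S] [Fintype H] {PCS : C → S → ℝ} {PS : S → ℝ}

/-- The posterior expectation `E[L_C(h) | S = s]` of the loss. Up to an additive constant, the
semantic distortion is the expectation of this letterwise distortion measure. -/
def posteriorLoss (PCS : C → S → ℝ) (PS : S → ℝ) (L : C → H → ℝ) (a : S × H) : ℝ :=
  (∑ c, PCS c a.1 * L c a.2) / PS a.1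

lemma sum_mul_trueLoss (hPS : ∀ c s, PS s = 0 → PCS c s = 0) (L : C → H → ℝ) (W : S → H → ℝ) :
    ∑ c, ∑ s, PCS c s * trueLoss L c (W s) = mean (jointPMF PS W) (posteriorLoss PCS PS L) := by
  rw [mean_jointPMF, sum_comm]
  refine sum_congr rfl fun s _ => ?_
  rcases eq_or_ne (PS s) 0 with hs | hs
  · simp [hs, hPS _ s hs]
  · simp only [trueLoss, mean, posteriorLoss, mul_sum, sum_div]
    rw [sum_comm]
    refine sum_congr rfl fun h _ => sum_congr rfl fun c _ => ?_
    field_simp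

lemma dsem_eq_mean_sub_mean (hPS : ∀ c s, PS s = 0 → PCS c s = 0) (L : C → H → ℝ)
    (Q W : S → H → ℝ) :
    dsem PCS L Q W = mean (jointPMF PS W) (posteriorLoss PCS PS L) -
      mean (jointPMF PS Q) (posteriorLoss PCS PS L) := by
  simp only [dsem, mul_sub, sum_sub_distrib, sum_mul_trueLoss hPS]

lemma davgCode_eq_blockMean_sub_mean (hPS : ∀ c s, PS s = 0 → PCS c s = 0)
    (L : C → H → ℝ) (Q : S → H → ℝ) {n : ℕ} (hn : 0 < n) (code : (Fin n → S) → Fin n → H) :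
    davgCode PCS PS L Q code = blockMean PS (posteriorLoss PCS PS L) code -
      mean (jointPMF PS Q) (posteriorLoss PCS PS L) := by
  simp only [davgCode, blockMean, dsem_eq_mean_sub_mean hPS, mean_jointPMF_inducedRule,
    mean_const_mul, mean_sum, sum_sub_distrib, mul_sub]
  simp [hn.ne']

lemma dsem_averagedRule (hPS : ∀ c s, PS s = 0 → PCS c s = 0)
    (L : C → H → ℝ) (Q : S → H → ℝ) {n : ℕ} (hn : 0 < n) (code : (Fin n → S) → Fin n → H) :
    dsem PCS L Q (averagedRule PS Q code) = davgCode PCS PS L Q code := by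
  rw [dsem_eq_mean_sub_mean hPS, mean_jointPMF_averagedRule,
    davgCode_eq_blockMean_sub_mean hPS L Q hn]

/-- The pairs (rate, distortion) that are dominated by the mutual information and the semantic
distortion of some learning rule. -/
def rateDistortionRegion (PCS : C → S → ℝ) (PS : S → ℝ) (L : C → H → ℝ) (Q : S → H → ℝ) :
    Set (ℝ × ℝ) :=
  {z | ∃ W, IsRule W ∧ minfo PS W ≤ z.1 ∧ dsem PCS L Q W ≤ z.2}

lemma isClosed_rateDistortionRegion (hp : IsPMF PS) (PCS : C → S → ℝ) (L : C → H → ℝ)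
    (Q : S → H → ℝ) : IsClosed (rateDistortionRegion PCS PS L Q) := by
  have hdsem : Continuous (dsem PCS L Q) := by
    unfold dsem trueLoss
    fun_prop
  have himage : IsCompact ((fun W => (minfo PS W, dsem PCS L Q W)) '' {W | IsRule W}) :=
    isCompact_setOf_isRule.image_of_continuousOn
      ((continuousOn_minfo hp).prodMk hdsem.continuousOn)
  convert isClosed_Ici (a := (0 : ℝ × ℝ)).add_left_of_isCompact himage
  ext z
  constructor
  · rintro ⟨W, hW, hI, hd⟩
    exact Set.mem_add.2 ⟨_, Set.mem_image_of_mem _ hW, z - (minfo PS W, dsem PCS L Q W),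
      sub_nonneg.2 (show (_, _) ≤ z from ⟨hI, hd⟩), add_sub_cancel _ _⟩
  · rintro ⟨_, ⟨W, hW, rfl⟩, w, hw, rfl⟩
    exact ⟨W, hW, le_add_of_nonneg_right hw.1, le_add_of_nonneg_right hw.2⟩

end Region

section Converse

lemma numMsg_pos (R : ℝ) (n : ℕ) : 0 < numMsg R n := Nat.ceil_pos.2 (by positivity)

lemma logb_numMsg_le (R : ℝ) {n : ℕ} (hn : 0 < n) :
    (1 / n : ℝ) * Real.logb 2 (numMsg R n) ≤ max R 0 + 1 / n := by
  have hle : (numMsg R n : ℝ) ≤ 2 ^ (n * max R 0 + 1) := by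
    have hceil : (numMsg R n : ℝ) < 2 ^ (n * R) + 1 := Nat.ceil_lt_add_one (by positivity)
    have hmono : (2 : ℝ) ^ (n * R) ≤ 2 ^ (n * max R 0) := by
      gcongr
      exacts [one_le_two, le_max_left _ _]
    have hone : (1 : ℝ) ≤ 2 ^ (n * max R 0) := Real.one_le_rpow one_le_two (by positivity)
    rw [Real.rpow_add two_pos, Real.rpow_one]
    linarith
  calc (1 / n : ℝ) * Real.logb 2 (numMsg R n) ≤ (1 / n : ℝ) * (n * max R 0 + 1) := by
        gcongr
        exact (Real.logb_le_iff_le_rpow one_lt_two (by exact_mod_cast numMsg_pos R n)).2 hle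
    _ = max R 0 + 1 / n := by field_simp

variable {C S H : Type*} [Fintype C] [Fintype S] [Fintype H] {PCS : C → S → ℝ} {PS : S → ℝ}
  {L : C → H → ℝ} {Q : S → H → ℝ} {R ε : ℝ}

lemma AchAvg.mem_rateDistortionRegion (hp : IsPMF PS) (hPS : ∀ c s, PS s = 0 → PCS c s = 0)
    (hQ : IsRule Q) (h : AchAvg PCS PS L Q R ε) :
    (max R 0, ε) ∈ rateDistortionRegion PCS PS L Q := by
  obtain ⟨f, g, l, hlim, hl⟩ := h
  have hrate : Tendsto (fun n : ℕ => max R 0 + 1 / (n : ℝ)) atTop (𝓝 (max R 0)) := by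
    simpa using tendsto_const_nhds.add (tendsto_one_div_atTop_nhds_zero_nat (𝕜 := ℝ))
  have hmem : (max R 0, l) ∈ rateDistortionRegion PCS PS L Q := by
    refine (isClosed_rateDistortionRegion hp PCS L Q).mem_of_tendsto (hrate.prodMk_nhds hlim) ?_
    filter_upwards [eventually_gt_atTop 0] with n hn
    exact ⟨averagedRule PS Q fun x => g n (f n x), isRule_averagedRule hp hQ hn _,
      (minfo_averagedRule_le hp hQ hn (numMsg_pos R n) (f n) (g n)).trans (logb_numMsg_le R hn),
      (dsem_averagedRule hPS L Q hn _).le⟩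
  obtain ⟨W, hW, hI, hd⟩ := hmem
  exact ⟨W, hW, hI, hd.trans hl.le⟩

lemma mem_rateDistortionRegion_of_mem_closure (hp : IsPMF PS)
    (hPS : ∀ c s, PS s = 0 → PCS c s = 0) (hQ : IsRule Q)
    (h : (R, ε) ∈ closure {z : ℝ × ℝ | AchAvg PCS PS L Q z.1 z.2}) :
    (max R 0, ε) ∈ rateDistortionRegion PCS PS L Q := by
  rw [← (isClosed_rateDistortionRegion hp PCS L Q).closure_eq]
  exact map_mem_closure (f := fun z : ℝ × ℝ => (max z.1 0, z.2)) (by fun_prop) h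
    fun z hz => AchAvg.mem_rateDistortionRegion hp hPS hQ hz

end Converse

section Covering

variable {X Y : Type*} [Fintype X] [Fintype Y] {p : X → ℝ} {q : Y → ℝ} {W : X → Y → ℝ}

lemma one_sub_pow_le {a b K : ℝ} (ha : a ∈ Set.Icc 0 1) (hb : b ≤ 1) (hK : 0 < K)
    (hab : a ≤ K * b) (M : ℕ) : (1 - b) ^ M ≤ 1 - a + Real.exp (-(M / K)) := by
  have hdiv : a / K ≤ b := (div_le_iff₀' hK).2 hab
  calc (1 - b) ^ M ≤ Real.exp (-(a / K)) ^ M :=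
        pow_le_pow_left₀ (by linarith) ((Real.one_sub_le_exp_neg b).trans (by gcongr)) M
    _ = Real.exp (a * -(M / K)) := by rw [← Real.exp_nat_mul]; ring_nf
    _ ≤ 1 - a + a * Real.exp (-(M / K)) := by
        simpa using convexOn_exp.2 (Set.mem_univ 0) (Set.mem_univ (-(M / K)))
          (sub_nonneg.2 ha.2) ha.1 (sub_add_cancel 1 a)
    _ ≤ 1 - a + Real.exp (-(M / K)) := by
        gcongr
        exact mul_le_of_le_one_left (Real.exp_pos _).le ha.2

lemma prob_iidPMF_forall_notMem (hq : IsPMF q) (M : ℕ) (E : Set Y) :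
    prob (iidPMF M q) {y | ∀ m, y m ∉ E} = (1 - prob q E) ^ M := by
  have hprod : ∀ y : Fin M → Y,
      {y | ∀ m, y m ∉ E}.indicator (1 : (Fin M → Y) → ℝ) y = ∏ m, Eᶜ.indicator 1 (y m) := by
    intro y
    simp only [Set.indicator_apply, Set.mem_compl_iff, Pi.one_apply, prod_ite_zero, prod_const_one,
      mem_univ, true_imp_iff, Set.mem_ofPred_eq]
  rw [← hq.prob_compl, prob, prob, funext hprod, mean_iidPMF_prod M q fun _ => Eᶜ.indicator 1]
  simp

lemma mean_comm (p : X → ℝ) (q : Y → ℝ) (F : X → Y → ℝ) :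
    mean q (fun y => mean p fun x => F x y) = mean p fun x => mean q (F x) := by
  simp only [mean, mul_sum]
  rw [sum_comm]
  simp only [mul_left_comm]

lemma prob_jointPMF (p : X → ℝ) (W : X → Y → ℝ) (E : Set (X × Y)) :
    prob (jointPMF p W) E = mean p fun x => prob (W x) (Prod.mk x ⁻¹' E) :=
  mean_jointPMF p W _

/-- The random covering lemma: `M` independent codewords of law `q` do the job on average. -/
lemma exists_codebook (hp : IsPMF p) (hq : IsPMF q) (hW : IsRule W) {T : Set (X × Y)} {K : ℝ}
    (hK : 0 < K) (hT : ∀ a ∈ T, W a.1 a.2 ≤ K * q a.2) (M : ℕ) :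
    ∃ y : Fin M → Y, prob p {x | ∀ m, (x, y m) ∉ T} ≤
      prob (jointPMF p W) Tᶜ + Real.exp (-(M / K)) := by
  obtain ⟨y, hy⟩ := (hq.iidPMF M).exists_le_mean fun y => prob p {x | ∀ m, (x, y m) ∉ T}
  refine ⟨y, hy.trans ?_⟩
  calc mean (iidPMF M q) (fun y => prob p {x | ∀ m, (x, y m) ∉ T})
      = mean p (fun x => prob (iidPMF M q) {y | ∀ m, y m ∉ Prod.mk x ⁻¹' T}) :=
        mean_comm _ _ _
    _ ≤ mean p (fun x => prob (W x) (Prod.mk x ⁻¹' T)ᶜ + Real.exp (-(M / K))) := by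
        refine mean_mono hp.1 fun x _ => ?_
        rw [prob_iidPMF_forall_notMem hq, (hW x).prob_compl]
        refine one_sub_pow_le ⟨(hW x).prob_nonneg _, (hW x).prob_le_one _⟩ (hq.prob_le_one _) hK
          ?_ M
        rw [prob, prob, ← mean_const_mul]
        refine sum_le_sum fun b _ => ?_
        by_cases hb : (x, b) ∈ T
        · simpa [hb, mul_comm] using hT _ hb
        · simp [hb]
    _ = prob (jointPMF p W) Tᶜ + Real.exp (-(M / K)) := by
        rw [mean_add, hp.mean_const, prob_jointPMF]
        rfl

end Covering

section TypicalSet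

variable {S H : Type*} {p : S → ℝ} {W : S → H → ℝ} {n : ℕ}

/-- The memoryless extension to blocks of length `n` of the channel `W`. -/
def blockRule (n : ℕ) (W : S → H → ℝ) (x : Fin n → S) (y : Fin n → H) : ℝ := ∏ i, W (x i) (y i)

lemma IsRule.blockRule [Fintype H] (hW : IsRule W) (n : ℕ) : IsRule (blockRule n W) := fun x =>
  ⟨fun y => prod_nonneg fun i _ => (hW (x i)).1 (y i), sum_prod_eq_one fun i => (hW (x i)).2⟩

variable [Fintype S]

/-- The blocks `x`, `y` of length `n` with information density at most `r` and distortion at most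
`D` per letter. The density is compared without division, so that the bound also holds where the
output law vanishes. -/
def typicalSet (p : S → ℝ) (W : S → H → ℝ) (d : S × H → ℝ) (r D : ℝ) (n : ℕ) :
    Set ((Fin n → S) × (Fin n → H)) :=
  {a | blockRule n W a.1 a.2 ≤ 2 ^ (n * r) * iidPMF n (outputPMF p W) a.2 ∧
    ∑ i, d (a.1 i, a.2 i) ≤ n * D}

variable [Fintype H]

lemma mean_jointPMF_blockRule (n : ℕ) (p : S → ℝ) (W : S → H → ℝ) (F : (Fin n → S × H) → ℝ) :
    mean (jointPMF (iidPMF n p) (blockRule n W)) (fun a => F fun i => (a.1 i, a.2 i)) =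
      mean (iidPMF n (jointPMF p W)) F := by
  refine (Fintype.sum_equiv (Equiv.arrowProdEquivProdArrow (Fin n) (fun _ => S) fun _ => H)
    _ _ fun z => ?_).symm
  simp [jointPMF, iidPMF, blockRule, prod_mul_distrib, Equiv.arrowProdEquivProdArrow]

lemma blockRule_le_of_sum_logb_le (hp : IsPMF p) (hW : IsRule W) {r : ℝ}
    {z : Fin n → S × H} (hz : 0 < iidPMF n (jointPMF p W) z)
    (hr : ∑ i, Real.logb 2 (likelihoodRatio p W (z i)) ≤ n * r) :
    ∏ i, W (z i).1 (z i).2 ≤ 2 ^ (n * r) * ∏ i, outputPMF p W (z i).2 := by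
  have hpos := fun i => (hp.jointPMF hW).pos_of_iidPMF_pos hz i
  have hratio := fun i => likelihoodRatio_pos hp hW (hpos i)
  rw [← Real.logb_prod _ _ fun i _ => (hratio i).ne',
    Real.logb_le_iff_le_rpow one_lt_two (prod_pos fun i _ => hratio i)] at hr
  simp only [likelihoodRatio, prod_div_distrib] at hr
  exact (div_le_iff₀ (prod_pos fun i _ => outputPMF_pos hp hW (hpos i))).1 hr

lemma tendsto_prob_typicalSet_compl (hp : IsPMF p) (hW : IsRule W) {d : S × H → ℝ} {r D : ℝ}
    (hr : minfo p W < r) (hD : mean (jointPMF p W) d < D) :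
    Tendsto (fun n => prob (jointPMF (iidPMF n p) (blockRule n W)) (typicalSet p W d r D n)ᶜ)
      atTop (𝓝 0) := by
  have hJ := hp.jointPMF hW
  rw [minfo_eq_mean] at hr
  refine squeeze_zero (fun n => ((hp.iidPMF n).jointPMF (hW.blockRule n)).prob_nonneg _)
    (fun n => ?_) (by simpa using (hJ.tendsto_prob_lt_sum hr).add (hJ.tendsto_prob_lt_sum hD))
  let unzip (z : Fin n → S × H) : (Fin n → S) × (Fin n → H) := (fun i => (z i).1, fun i => (z i).2)
  calc prob (jointPMF (iidPMF n p) (blockRule n W)) (typicalSet p W d r D n)ᶜ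
      = prob (iidPMF n (jointPMF p W)) {z | unzip z ∉ typicalSet p W d r D n} :=
        mean_jointPMF_blockRule n p W ({z | unzip z ∉ typicalSet p W d r D n}.indicator 1)
    _ ≤ _ := by
        refine prob_le_add (hJ.iidPMF n).1 fun z hz hbad => ?_
        by_contra hgood
        simp only [Set.mem_union, Set.mem_ofPred_eq, not_or, not_lt] at hgood
        exact hbad ⟨blockRule_le_of_sum_logb_le hp hW hz hgood.1, hgood.2⟩

end TypicalSet

section Achievability

lemma tendsto_exp_neg_numMsg_div {r R : ℝ} (h : r < R) :
    Tendsto (fun n : ℕ => Real.exp (-(numMsg R n / 2 ^ (n * r)))) atTop (𝓝 0) := by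
  have hpow : Tendsto (fun n : ℕ => ((2 : ℝ) ^ (R - r)) ^ n) atTop atTop :=
    tendsto_pow_atTop_atTop_of_one_lt (Real.one_lt_rpow one_lt_two (sub_pos.2 h))
  refine Real.tendsto_exp_neg_atTop_nhds_zero.comp (tendsto_atTop_mono (fun n => ?_) hpow)
  calc ((2 : ℝ) ^ (R - r)) ^ n = 2 ^ (n * R) / 2 ^ (n * r) := by
        rw [← Real.rpow_mul_natCast two_pos.le, ← Real.rpow_sub two_pos]
        ring_nf
    _ ≤ numMsg R n / 2 ^ (n * r) := by
        gcongr
        exact Nat.le_ceil _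

variable {S H : Type*} [Fintype S] {p : S → ℝ} {d : S × H → ℝ} {n : ℕ}

lemma blockMean_le (hp : IsPMF p) (hn : 0 < n) {B D : ℝ} (hd : ∀ a, d a ≤ D + B)
    (code : (Fin n → S) → Fin n → H) :
    blockMean p d code ≤ D + B * prob (iidPMF n p) {x | n * D < ∑ i, d (x i, code x i)} := by
  have hn' : (0 : ℝ) < n := by exact_mod_cast hn
  rw [prob, ← mean_const_mul, ← (hp.iidPMF n).mean_const D, ← mean_add,
    (hp.iidPMF n).mean_const]
  refine mean_mono (hp.iidPMF n).1 fun x _ => ?_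
  rw [one_div_mul_eq_div, div_le_iff₀' hn']
  by_cases hx : n * D < ∑ i, d (x i, code x i)
  · simpa [hx, mul_add] using sum_le_sum fun i (_ : i ∈ univ) => hd (x i, code x i)
  · simpa [hx] using not_lt.1 hx

lemma exists_encoder {X Y : Type*} {M : ℕ} (hM : 0 < M) (y : Fin M → Y) (T : Set (X × Y)) :
    ∃ f : X → Fin M, ∀ x, (∃ m, (x, y m) ∈ T) → (x, y (f x)) ∈ T := by
  have : Nonempty (Fin M) := ⟨⟨0, hM⟩⟩
  choose! f hf using fun x (hx : ∃ m, (x, y m) ∈ T) => hx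
  exact ⟨f, hf⟩

variable [Fintype H] {W : S → H → ℝ} {R D : ℝ}

lemma eventually_exists_code (hp : IsPMF p) (hW : IsRule W) (hR : minfo p W < R)
    (hD : mean (jointPMF p W) d < D) :
    ∀ᶠ n in atTop, ∃ c : ((Fin n → S) → Fin (numMsg R n)) × (Fin (numMsg R n) → Fin n → H),
      blockMean p d (fun x => c.2 (c.1 x)) ≤ D := by
  obtain ⟨r, hIr, hrR⟩ := exists_between hR
  obtain ⟨D', hdD', hD'⟩ := exists_between hD
  obtain ⟨B, hB⟩ : ∃ B, 0 ≤ B ∧ ∀ a, d a ≤ D' + B := by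
    obtain ⟨b, hb⟩ := (Set.finite_range d).bddAbove
    exact ⟨max (b - D') 0, le_max_right _ _, fun a => by
      linarith [hb (Set.mem_range_self a), le_max_left (b - D') 0]⟩
  have hmiss : Tendsto (fun n : ℕ => D' + B *
      (prob (jointPMF (iidPMF n p) (blockRule n W)) (typicalSet p W d r D' n)ᶜ +
        Real.exp (-(numMsg R n / 2 ^ (n * r))))) atTop (𝓝 D') := by
    simpa using (((tendsto_prob_typicalSet_compl hp hW hIr hdD').add
      (tendsto_exp_neg_numMsg_div hrR)).const_mul B).const_add D'
  filter_upwards [hmiss.eventually_le_const hD', eventually_gt_atTop 0] with n hle hn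
  obtain ⟨g, hg⟩ := exists_codebook (hp.iidPMF n) ((hp.outputPMF hW).iidPMF n) (hW.blockRule n)
    (T := typicalSet p W d r D' n) (K := 2 ^ (n * r)) (by positivity) (fun a ha => ha.1)
    (numMsg R n)
  obtain ⟨f, hf⟩ := exists_encoder (numMsg_pos R n) g (typicalSet p W d r D' n)
  refine ⟨(f, g), (blockMean_le hp hn hB.2 _).trans (le_trans ?_ hle)⟩
  gcongr
  · exact hB.1
  refine le_trans (mean_mono (hp.iidPMF n).1 fun x _ => ?_) hg
  refine Set.indicator_le_indicator_of_subset (fun x hx m hm => ?_) (fun _ => zero_le_one) x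
  exact not_le_of_gt hx (hf x ⟨m, hm⟩).2

end Achievability

section Interpolation

lemma exists_abs_sub_le_of_abs_succ_sub_le {v : ℕ → ℝ} {τ e : ℝ} {n : ℕ} (h0 : v 0 ≤ τ)
    (hn : τ ≤ v n) (hstep : ∀ k, |v (k + 1) - v k| ≤ e) : ∃ k, |v k - τ| ≤ e := by
  have hex : ∃ k, τ ≤ v k := ⟨n, hn⟩
  refine ⟨Nat.find hex, ?_⟩
  rw [abs_of_nonneg (sub_nonneg.2 (Nat.find_spec hex))]
  rcases hk : Nat.find hex with _ | k
  · linarith [abs_nonneg (v (0 + 1) - v 0), hstep 0]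
  · have hlt : v k < τ := not_le.1 (Nat.find_min hex (by omega))
    linarith [(abs_le.1 (hstep k)).2]

lemma exists_abs_average_ite_sub_le {n : ℕ} (hn : 0 < n) {a : Fin n → ℝ} {c e τ : ℝ}
    (hac : ∀ i, |c - a i| ≤ e) (hlo : (1 / n : ℝ) * ∑ i, a i ≤ τ) (hhi : τ ≤ c) :
    ∃ k : ℕ, |(1 / n : ℝ) * ∑ i : Fin n, (if i.val < k then c else a i) - τ| ≤
      (1 / n : ℝ) * e := by
  have hn' : (0 : ℝ) < n := by exact_mod_cast hn
  refine exists_abs_sub_le_of_abs_succ_sub_le (n := n) (by simpa using hlo)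
    (by simpa [hn.ne'] using hhi) fun k => ?_
  rw [← mul_sub, abs_mul, abs_of_pos (one_div_pos.2 hn'), ← sum_sub_distrib]
  gcongr
  calc |∑ i : Fin n, ((if i.val < k + 1 then c else a i) - if i.val < k then c else a i)|
      ≤ ∑ i : Fin n, if i.val = k then e else 0 := by
        refine abs_sum_le_sum_abs _ _ |>.trans (sum_le_sum fun i _ => ?_)
        rcases lt_trichotomy i.val k with h | h | h
        · simp [h, h.ne, h.trans k.lt_succ_self]
        · simpa [h] using hac i
        · simp [h.ne', not_lt.2 h.le, not_lt.2 (Nat.succ_le_of_lt h)]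
    _ ≤ e := by
        rw [Fin.sum_univ_eq_sum_range (fun j => if j = k then e else 0) n, sum_ite_eq']
        split_ifs
        exacts [le_rfl, (abs_nonneg _).trans (hac ⟨0, hn⟩)]

variable {S H : Type*} [Fintype S] {p : S → ℝ} {d : S × H → ℝ} {n : ℕ}

/-- Replacing one more letter of every codeword by the model `h` moves the distortion by
`O(1 / n)`, so the intermediate distortions leave no gap. -/
lemma exists_decoder_abs_blockMean_sub_le (hp : IsPMF p) (hn : 0 < n) {B τ : ℝ}
    (hB : ∀ a, |d a| ≤ B) {h : H} (hτ : τ ≤ mean p fun s => d (s, h)) {M : ℕ}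
    (f : (Fin n → S) → Fin M) (g : Fin M → Fin n → H)
    (hg : blockMean p d (fun x => g (f x)) ≤ τ) :
    ∃ g' : Fin M → Fin n → H, |blockMean p d (fun x => g' (f x)) - τ| ≤ (1 / n : ℝ) * (2 * B) := by
  simp only [blockMean, mean_const_mul, mean_sum] at hg ⊢
  have hdist : ∀ i, |(mean p fun s => d (s, h)) -
      mean (iidPMF n p) fun x => d (x i, g (f x) i)| ≤ 2 * B := by
    intro i
    have hconst := hp.abs_mean_le fun s => hB (s, h)
    have hcode := (hp.iidPMF n).abs_mean_le fun x => hB (x i, g (f x) i)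
    exact (abs_sub _ _).trans (by linarith)
  obtain ⟨k, hk⟩ := exists_abs_average_ite_sub_le hn hdist hg hτ
  refine ⟨fun m i => if i.val < k then h else g m i, hk.trans_eq' ?_⟩
  congr 4 with i
  split_ifs with hi
  · simp only [if_pos hi, hp.mean_iidPMF_apply i fun s => d (s, h)]
  · simp only [if_neg hi]

end Interpolation

section RateDistortion

variable {C S H : Type*} [Fintype C] [Fintype S] [Fintype H] {PCS : C → S → ℝ} {PS : S → ℝ}
  {L : C → H → ℝ} {Q W : S → H → ℝ} {R ε : ℝ}

lemma achAvg_of_const_lt (hp : IsPMF PS) (hPS : ∀ c s, PS s = 0 → PCS c s = 0) (R : ℝ) {h : H}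
    (hh : (mean PS fun s => posteriorLoss PCS PS L (s, h)) -
      mean (jointPMF PS Q) (posteriorLoss PCS PS L) < ε) : AchAvg PCS PS L Q R ε := by
  refine ⟨fun n _ => ⟨0, numMsg_pos R n⟩, fun n _ _ => h, _, tendsto_const_nhds.congr' ?_, hh⟩
  filter_upwards [eventually_gt_atTop 0] with n hn
  simp only [davgCode_eq_blockMean_sub_mean hPS L Q hn, blockMean, mean_const_mul, mean_sum,
    hp.mean_iidPMF_apply _ fun s => posteriorLoss PCS PS L (s, h)]
  simp [ne_of_gt hn]

/-- If all constant models have distortion at least `ε`, they serve to interpolate: a code better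
than a prescribed `τ < ε` is degraded to distortion `τ + O(1 / n)`, which forces the distortions to
converge. -/
lemma achAvg_of_lt (hp : IsPMF PS) (hPS : ∀ c s, PS s = 0 → PCS c s = 0) (hW : IsRule W)
    (hR : minfo PS W < R) (hε : dsem PCS L Q W < ε) : AchAvg PCS PS L Q R ε := by
  set ℓ := posteriorLoss PCS PS L
  set κ := mean (jointPMF PS Q) ℓ with hκ
  by_cases! hconst : ∃ h, (mean PS fun s => ℓ (s, h)) - κ < ε
  · obtain ⟨h, hh⟩ := hconst
    exact achAvg_of_const_lt hp hPS R hh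
  rw [dsem_eq_mean_sub_mean hPS, ← hκ, sub_lt_iff_lt_add] at hε
  obtain ⟨s⟩ := hp.nonempty
  obtain ⟨h⟩ := (hW s).nonempty
  obtain ⟨τ, hWτ, hτ⟩ := exists_between hε
  have hτh : τ ≤ mean PS fun s => ℓ (s, h) := by linarith [hconst h]
  obtain ⟨B, hB⟩ := (Set.finite_range fun a => |ℓ a|).bddAbove
  have hgood : ∀ᶠ n in atTop, ∃ c : ((Fin n → S) → Fin (numMsg R n)) ×
      (Fin (numMsg R n) → Fin n → H),
      |davgCode PCS PS L Q (fun x => c.2 (c.1 x)) - (τ - κ)| ≤ (1 / n : ℝ) * (2 * B) := by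
    filter_upwards [eventually_exists_code hp hW hR hWτ, eventually_gt_atTop 0]
      with n ⟨⟨f, g⟩, hfg⟩ hn
    obtain ⟨g', hg'⟩ := exists_decoder_abs_blockMean_sub_le hp hn
      (fun a => hB (Set.mem_range_self a)) hτh f g hfg
    exact ⟨(f, g'), by
      rwa [davgCode_eq_blockMean_sub_mean hPS L Q hn, sub_sub_sub_cancel_right]⟩
  have : ∀ n, Nonempty (((Fin n → S) → Fin (numMsg R n)) × (Fin (numMsg R n) → Fin n → H)) :=
    fun n => ⟨fun _ => ⟨0, numMsg_pos R n⟩, fun _ _ => h⟩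
  obtain ⟨c, hc⟩ := Filter.skolem.1 hgood
  refine ⟨fun n => (c n).1, fun n => (c n).2, τ - κ, ?_, sub_lt_iff_lt_add.2 hτ⟩
  refine tendsto_iff_norm_sub_tendsto_zero.2 (squeeze_zero' (.of_forall fun n => norm_nonneg _)
    hc ?_)
  simpa using (tendsto_one_div_atTop_nhds_zero_nat (𝕜 := ℝ)).mul_const (2 * B)

lemma mem_closure_of_mem_rateDistortionRegion (hp : IsPMF PS)
    (hPS : ∀ c s, PS s = 0 → PCS c s = 0) (h : (R, ε) ∈ rateDistortionRegion PCS PS L Q) :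
    (R, ε) ∈ closure {z : ℝ × ℝ | AchAvg PCS PS L Q z.1 z.2} := by
  obtain ⟨W, hW, hI, hd⟩ := h
  refine closure_mono (s := Set.Ioi (minfo PS W) ×ˢ Set.Ioi (dsem PCS L Q W))
    (fun z hz => achAvg_of_lt hp hPS hW hz.1 hz.2) ?_
  rw [closure_prod_eq, closure_Ioi, closure_Ioi]
  exact ⟨hI, hd⟩

lemma numMsg_of_neg (hR : R < 0) : numMsg R = fun _ => 1 := by
  funext n
  refine Nat.ceil_eq_iff one_ne_zero |>.2 ⟨by simpa using Real.rpow_pos_of_pos two_pos _, ?_⟩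
  simpa using Real.rpow_le_one_of_one_le_of_nonpos one_le_two
    (mul_nonpos_of_nonneg_of_nonpos n.cast_nonneg hR.le)

lemma AchAvg.of_neg {R' : ℝ} (hR : R < 0) (hR' : R' < 0) (h : AchAvg PCS PS L Q R ε) :
    AchAvg PCS PS L Q R' ε := by
  unfold AchAvg at h ⊢
  rwa [numMsg_of_neg hR', ← numMsg_of_neg hR]

lemma mem_closure_of_neg {R' : ℝ} (hR : R < 0) (hR' : R' < 0)
    (h : (R, ε) ∈ closure {z : ℝ × ℝ | AchAvg PCS PS L Q z.1 z.2}) :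
    (R', ε) ∈ closure {z : ℝ × ℝ | AchAvg PCS PS L Q z.1 z.2} := by
  have hopen : IsOpen {z : ℝ × ℝ | z.1 < 0} := isOpen_lt continuous_fst continuous_const
  exact map_mem_closure (f := fun z : ℝ × ℝ => (R', z.2)) (by fun_prop)
    (hopen.inter_closure ⟨hR, h⟩) fun z hz => AchAvg.of_neg hz.1 hR' hz.2

/-- If `A` has a negative element, it is unbounded below and `sInf A` has the junk value `0`, which
is then also the least element of `B`. -/
lemma sInf_eq_sInf_of_forall_exists_le_max {A B : Set ℝ} (hB : ∀ b ∈ B, 0 ≤ b) (hBA : B ⊆ A)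
    (hAB : ∀ a ∈ A, ∃ b ∈ B, b ≤ max a 0) (hneg : ∀ a ∈ A, a < 0 → Set.Iio 0 ⊆ A) :
    sInf A = sInf B := by
  by_cases hA : ∃ a ∈ A, a < 0
  · obtain ⟨a, ha, ha0⟩ := hA
    obtain ⟨b, hb, hba⟩ := hAB a ha
    have hb0 : b = 0 := le_antisymm (hba.trans_eq (max_eq_right ha0.le)) (hB b hb)
    have hunbounded : ¬BddBelow A := fun h => not_bddBelow_Iio 0 (h.mono (hneg a ha ha0))
    rw [Real.sInf_of_not_bddBelow hunbounded]
    exact (IsLeast.csInf_eq ⟨hb0 ▸ hb, hB⟩).symm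
  · push Not at hA
    rcases A.eq_empty_or_nonempty with rfl | hAne
    · rw [Set.subset_empty_iff.1 hBA]
    obtain ⟨b₀, hb₀, -⟩ := hAB _ hAne.some_mem
    refine le_antisymm (csInf_le_csInf ⟨0, hA⟩ ⟨b₀, hb₀⟩ hBA) (le_csInf hAne fun a ha => ?_)
    obtain ⟨b, hb, hba⟩ := hAB a ha
    exact (csInf_le ⟨0, hB⟩ hb).trans (hba.trans_eq (max_eq_left (hA a ha)))

lemma IsPMF.marginal (h : IsPMF fun a : C × S => PCS a.1 a.2) : IsPMF fun s => ∑ c, PCS c s :=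
  ⟨fun s => sum_nonneg fun c _ => h.1 (c, s), by
    rw [sum_comm, ← Fintype.sum_prod_type', h.2]⟩

end RateDistortion

theorem rate_distortion_davg_general {C S H : Type*} [Fintype C] [Fintype S] [Fintype H]
    (PCS : C → S → ℝ) (hPCS : IsPMF fun a : C × S => PCS a.1 a.2)
    (PS : S → ℝ) (hPS : PS = fun s => ∑ c, PCS c s)
    (L : C → H → ℝ) (Q : S → H → ℝ) (hQ : IsRule Q) (ε : ℝ) :
    sInf {R : ℝ | (R, ε) ∈ closure {p : ℝ × ℝ | AchAvg PCS PS L Q p.1 p.2}} =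
      sInf {r : ℝ | ∃ Qt : S → H → ℝ, IsRule Qt ∧ dsem PCS L Q Qt ≤ ε ∧
        r = minfo PS Qt} := by
  have hp : IsPMF PS := hPS ▸ hPCS.marginal
  have hnull : ∀ c s, PS s = 0 → PCS c s = 0 := fun c s hs =>
    (sum_eq_zero_iff_of_nonneg fun c _ => hPCS.1 (c, s)).1 (congrFun hPS s ▸ hs) c (mem_univ c)
  refine sInf_eq_sInf_of_forall_exists_le_max ?_ ?_ (fun R hR => ?_)
    fun R hR hR0 R' hR' => mem_closure_of_neg hR0 hR' hR
  · rintro _ ⟨W, hW, -, rfl⟩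
    exact minfo_nonneg hp hW
  · rintro _ ⟨W, hW, hd, rfl⟩
    exact mem_closure_of_mem_rateDistortionRegion hp hnull ⟨W, hW, le_rfl, hd⟩
  · obtain ⟨W, hW, hI, hd⟩ := mem_rateDistortionRegion_of_mem_closure hp hnull hQ hR
    exact ⟨_, ⟨W, hW, hd, rfl⟩, hI⟩

/-- **Rate–distortion theorem for `d_avg`** (Theorem 1): the rate–distortion
function `R(ε)` equals the minimum of `I_{Q̃}(S;H)` over all learning rules `Q̃`
with `d_sem(Q, Q̃) ≤ ε`. -/
theorem rate_distortion_davg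
    {C S H : Type*} [Fintype C] [Fintype S] [Fintype H]
    [Nonempty C] [Nonempty S] [Nonempty H]
    (PC : C → ℝ) (hPC : IsPMF PC)
    (PSC : C → S → ℝ) (hPSC : ∀ c, IsPMF (PSC c))
    (PCS : C → S → ℝ) (hPCS : PCS = fun c s => PC c * PSC c s)
    (PS : S → ℝ) (hPS : PS = fun s => ∑ c, PCS c s)
    (L : C → H → ℝ) (hL : ∀ c h, L c h ∈ Set.Icc (0 : ℝ) 1)
    (Q : S → H → ℝ) (hQ : IsRule Q) (ε : ℝ) :
    sInf {R : ℝ | (R, ε) ∈ closure {p : ℝ × ℝ | AchAvg PCS PS L Q p.1 p.2}} =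
      sInf {r : ℝ | ∃ Qt : S → H → ℝ, IsRule Qt ∧ dsem PCS L Q Qt ≤ ε ∧
        r = minfo PS Qt} := by
  subst hPCS
  exact rate_distortion_davg_general _ (hPC.jointPMF hPSC) PS hPS L Q hQ ε
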